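/- arXiv:2302.10118 — 3 statements merged into one kernel-verified Lean document; each statement's English description precedes it below -/
import Mathlib

section
/- Every d ∈ K_{2n} satisfies the inequalities (E_{i,j,k}): d_{i,j} + d_{k,(j+1)̄} ≥ d_{i,k̄} for all 1 ≤ i ≤ j ≤ n−1 and i ≤ k ≤ j+1, and (F_{i,j,k}): d_{i,j} + d_{j+1,k̄} ≥ d_{i,k̄} for all 1 ≤ i ≤ j < k ≤ n. -/
/-- Index of a positive root of `sp_{2n}`: `(i, j, false)` encodes `α_{i,j}` with
`1 ≤ i ≤ j ≤ n`, and `(i, j, true)` encodes `α_{i,j̄}` with `1 ≤ i ≤ j ≤ n-1`. -/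
def IsSpRootIdx (n : ℕ) (t : ℕ × ℕ × Bool) : Prop :=
  1 ≤ t.1 ∧ t.1 ≤ t.2.1 ∧ t.2.1 ≤ n ∧ (t.2.2 = true → t.2.1 + 1 ≤ n)

instance (n : ℕ) (t : ℕ × ℕ × Bool) : Decidable (IsSpRootIdx n t) :=
  inferInstanceAs (Decidable (1 ≤ t.1 ∧ t.1 ≤ t.2.1 ∧ t.2.1 ≤ n ∧ (t.2.2 = true → t.2.1 + 1 ≤ n)))

/-- The set `Φ⁺` of positive roots of `sp_{2n}`. -/
def SpRoot (n : ℕ) : Type := {t : ℕ × ℕ × Bool // IsSpRootIdx n t}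

/-- Normalised root index, implementing the convention `α_{i,n̄} := α_{i,n}`. -/
def rIdx (n i j : ℕ) (b : Bool) : ℕ × ℕ × Bool :=
  if b = true ∧ j = n then (i, j, false) else (i, j, b)
/-- Evaluate `d ∈ ℝ^{Φ⁺}` on a root index (value `0` outside `Φ⁺`). -/
noncomputable def dval {n : ℕ} (d : SpRoot n → ℝ) (t : ℕ × ℕ × Bool) : ℝ :=
  if h : IsSpRootIdx n t then d ⟨t, h⟩ else 0

/-- `d_{i,j}`. -/
noncomputable def dA {n : ℕ} (d : SpRoot n → ℝ) (i j : ℕ) : ℝ := dval d (i, j, false)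

/-- `d_{i,j̄}`, with the convention `d_{i,n̄} = d_{i,n}`. -/
noncomputable def dB {n : ℕ} (d : SpRoot n → ℝ) (i j : ℕ) : ℝ := dval d (rIdx n i j true)
inductive FacetKind
  | A | B | C | D
  deriving DecidableEq

/-- Labels of the `n(n-1)` defining inequalities (facets) of `K_{2n}`. -/
def Facets (n : ℕ) : Set (FacetKind × ℕ × ℕ) :=
  {f | (f.1 = FacetKind.A ∧ 1 ≤ f.2.1 ∧ f.2.1 + 1 ≤ n ∧ f.2.2 = f.2.1 + 1) ∨
       (f.1 = FacetKind.B ∧ 1 ≤ f.2.1 ∧ f.2.1 < f.2.2 ∧ f.2.2 + 1 ≤ n) ∨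
       (f.1 = FacetKind.C ∧ 1 ≤ f.2.1 ∧ f.2.1 < f.2.2 ∧ f.2.2 + 1 ≤ n) ∨
       (f.1 = FacetKind.D ∧ 1 ≤ f.2.1 ∧ f.2.1 + 1 ≤ n ∧ f.2.2 = f.2.1 + 1)}

/-- Left-hand side of the defining inequality with a given label. -/
noncomputable def facetLhs {n : ℕ} (d : SpRoot n → ℝ) : FacetKind × ℕ × ℕ → ℝ
  | (FacetKind.A, i, _) => dA d i i + dA d (i+1) (i+1)
  | (FacetKind.B, i, j) => dA d i j + dA d (i+1) (j+1)
  | (FacetKind.C, i, j) => dB d i (j+1) + dB d (i+1) j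
  | (FacetKind.D, i, _) => 2 * dB d i (i+1)

/-- Right-hand side of the defining inequality with a given label. -/
noncomputable def facetRhs {n : ℕ} (d : SpRoot n → ℝ) : FacetKind × ℕ × ℕ → ℝ
  | (FacetKind.A, i, _) => dA d i (i+1)
  | (FacetKind.B, i, j) => dA d i (j+1) + dA d (i+1) j
  | (FacetKind.C, i, j) => dB d i j + dB d (i+1) (j+1)
  | (FacetKind.D, i, _) => dB d i i + dB d (i+1) (i+1)

/-- The symplectic FFLV degree cone `K_{2n} ⊆ ℝ^{Φ⁺}`. -/
def Kcone (n : ℕ) : Set (SpRoot n → ℝ) :=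
  {d | ∀ f ∈ Facets n, facetRhs d f ≤ facetLhs d f}

/-- Points of `ℝ^{Φ⁺}` satisfying every defining inequality of `K_{2n}` strictly. -/
def KconeStrict (n : ℕ) : Set (SpRoot n → ℝ) :=
  {d | ∀ f ∈ Facets n, facetRhs d f < facetLhs d f}

/-! A *Monge* inequality between adjacent rows and columns propagates to arbitrary rectangles. Here
`-d_{i,j}` is Monge by (B) and `d_{i,j̄}` by (C). Combining the rectangles of `-d_{i,j}` with (A)
gives the type A inequality `d_{i,k} ≤ d_{i,j} + d_{j+1,k}`; for `k = n` it is (F), and the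
rectangles of `d_{i,j̄}` move (F) from column `n` to any other column. The rectangles of `d_{i,j̄}`
also extend (D) to `d_{i,k̄} + d_{m,m̄} ≤ d_{i,m̄} + d_{k,m̄}`, which for `m = j + 1` turns (F) with
`k = j + 1` into (E). -/

/-- The array `c` is *Monge* on the triangle `l ≤ i ≤ j ≤ u`. Only the adjacent `2 × 2` blocks lying
inside the triangle are constrained, which is the form of (C) for `d_{i,j̄}` and of (B) for
`-d_{i,j}`; `IsTriangleMonge.rectangle_le` recovers all rectangles. -/
def IsTriangleMonge {G : Type*} [Add G] [LE G] (l u : ℕ) (c : ℕ → ℕ → G) : Prop :=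
  ∀ i j, l ≤ i → i < j → j < u → c i j + c (i + 1) (j + 1) ≤ c i (j + 1) + c (i + 1) j

namespace IsTriangleMonge

variable {G : Type*} [AddCommGroup G] [PartialOrder G] [IsOrderedAddMonoid G]
  {l u : ℕ} {c : ℕ → ℕ → G}

theorem adjacent_columns_le (hc : IsTriangleMonge l u c) {i i' j : ℕ}
    (hl : l ≤ i) (hi : i ≤ i') (hij : i' ≤ j) (hu : j < u) :
    c i j + c i' (j + 1) ≤ c i (j + 1) + c i' j := by
  induction i', hi using Nat.le_induction with
  | base => exact (add_comm _ _).le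
  | succ m him ih =>
    have adjacent := hc m j (hl.trans him) hij hu
    linear_combination (norm := (abel_nf; rfl)) ih (by lia) + adjacent

theorem rectangle_le (hc : IsTriangleMonge l u c) {i i' j j' : ℕ}
    (hl : l ≤ i) (hi : i ≤ i') (hij : i' ≤ j) (hj : j ≤ j') (hu : j' ≤ u) :
    c i j + c i' j' ≤ c i j' + c i' j := by
  induction j', hj using Nat.le_induction with
  | base => exact le_rfl
  | succ m hjm ih =>
    have adjacent := hc.adjacent_columns_le hl hi (hij.trans hjm) hu
    linear_combination (norm := (abel_nf; rfl)) ih (by lia) + adjacent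

theorem diag_add_diag_le_two_nsmul (hc : IsTriangleMonge l u c)
    (hdiag : ∀ i, l ≤ i → i < u → c i i + c (i + 1) (i + 1) ≤ 2 • c i (i + 1))
    {i j : ℕ} (hl : l ≤ i) (hij : i ≤ j) (hu : j ≤ u) :
    c i i + c j j ≤ 2 • c i j := by
  induction j, hij using Nat.le_induction with
  | base => exact (two_nsmul _).ge
  | succ m him ih =>
    have rect := hc.rectangle_le hl him le_rfl m.le_succ hu
    linear_combination (norm := (abel_nf; rfl)) ih (by lia) + hdiag m (hl.trans him) hu + 2 • rect

theorem add_diag_le_add (hc : IsTriangleMonge l u c)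
    (hdiag : ∀ i, l ≤ i → i < u → c i i + c (i + 1) (i + 1) ≤ 2 • c i (i + 1))
    {i k m : ℕ} (hl : l ≤ i) (hik : i ≤ k) (hkm : k ≤ m) (hu : m ≤ u) :
    c i k + c m m ≤ c i m + c k m := by
  have rect := hc.rectangle_le hl hik le_rfl hkm hu
  have diag := hc.diag_add_diag_le_two_nsmul hdiag (hl.trans hik) hkm hu
  linear_combination (norm := (abel_nf; rfl)) rect + diag

theorem le_add_of_neg (hc : IsTriangleMonge l u (-c))
    (hdiag : ∀ i, l ≤ i → i < u → c i (i + 1) ≤ c i i + c (i + 1) (i + 1))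
    {i j k : ℕ} (hl : l ≤ i) (hij : i ≤ j) (hjk : j < k) (hu : k ≤ u) :
    c i k ≤ c i j + c (j + 1) k := by
  have left := hc.rectangle_le hl hij le_rfl j.le_succ (by lia)
  have right := hc.rectangle_le hl (Nat.le_succ_of_le hij) le_rfl hjk hu
  simp only [Pi.neg_apply] at left right
  have corner := hdiag j (hl.trans hij) (hjk.trans_le hu)
  linear_combination (norm := (abel_nf; rfl)) left + right + corner

end IsTriangleMonge

section Kcone

variable {n : ℕ} {d : SpRoot n → ℝ}

theorem dB_right_eq_dA (d : SpRoot n → ℝ) (i : ℕ) : dB d i n = dA d i n := by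
  simp [dA, dB, rIdx]

theorem dA_succ_le_of_mem_Kcone (hd : d ∈ Kcone n) {i : ℕ} (hi : 1 ≤ i) (hin : i < n) :
    dA d i (i + 1) ≤ dA d i i + dA d (i + 1) (i + 1) :=
  hd (.A, i, i + 1) (.inl ⟨rfl, hi, hin, rfl⟩)

theorem isTriangleMonge_neg_dA (hd : d ∈ Kcone n) : IsTriangleMonge 1 n (-dA d) := by
  intro i j hi hij hjn
  have facet : dA d i (j + 1) + dA d (i + 1) j ≤ dA d i j + dA d (i + 1) (j + 1) :=
    hd (.B, i, j) (.inr (.inl ⟨rfl, hi, hij, hjn⟩))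
  simp only [Pi.neg_apply]
  linarith

theorem isTriangleMonge_dB (hd : d ∈ Kcone n) : IsTriangleMonge 1 n (dB d) :=
  fun i j hi hij hjn ↦ hd (.C, i, j) (.inr (.inr (.inl ⟨rfl, hi, hij, hjn⟩)))

theorem dB_add_dB_succ_le_of_mem_Kcone (hd : d ∈ Kcone n) {i : ℕ} (hi : 1 ≤ i) (hin : i < n) :
    dB d i i + dB d (i + 1) (i + 1) ≤ 2 • dB d i (i + 1) := by
  rw [nsmul_eq_mul, Nat.cast_ofNat]
  exact hd (.D, i, i + 1) (.inr (.inr (.inr ⟨rfl, hi, hin, rfl⟩)))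

theorem dA_le_dA_add_dA (hd : d ∈ Kcone n) {i j k : ℕ}
    (hi : 1 ≤ i) (hij : i ≤ j) (hjk : j < k) (hkn : k ≤ n) :
    dA d i k ≤ dA d i j + dA d (j + 1) k :=
  (isTriangleMonge_neg_dA hd).le_add_of_neg (fun _ ↦ dA_succ_le_of_mem_Kcone hd) hi hij hjk hkn

theorem dB_le_dA_add_dB (hd : d ∈ Kcone n) {i j k : ℕ}
    (hi : 1 ≤ i) (hij : i ≤ j) (hjk : j < k) (hkn : k ≤ n) :
    dB d i k ≤ dA d i j + dB d (j + 1) k := by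
  have column_n : dB d i n ≤ dA d i j + dB d (j + 1) n := by
    simpa only [dB_right_eq_dA] using dA_le_dA_add_dA hd hi hij (hjk.trans_le hkn) le_rfl
  have rect := (isTriangleMonge_dB hd).rectangle_le hi (Nat.le_succ_of_le hij) hjk hkn le_rfl
  linarith

theorem dB_add_dB_diag_le (hd : d ∈ Kcone n) {i k m : ℕ}
    (hi : 1 ≤ i) (hik : i ≤ k) (hkm : k ≤ m) (hmn : m ≤ n) :
    dB d i k + dB d m m ≤ dB d i m + dB d k m :=
  (isTriangleMonge_dB hd).add_diag_le_add (fun _ ↦ dB_add_dB_succ_le_of_mem_Kcone hd)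
    hi hik hkm hmn

end Kcone

/-- Every `d ∈ K_{2n}` satisfies
`(E_{i,j,k}) : d_{i,j} + d_{k,(j+1)̄} ≥ d_{i,k̄}` for `1 ≤ i ≤ j ≤ n-1`, `i ≤ k ≤ j+1`, and
`(F_{i,j,k}) : d_{i,j} + d_{j+1,k̄} ≥ d_{i,k̄}` for `1 ≤ i ≤ j < k ≤ n`. -/
theorem spFFLV_ineq_E_F (n : ℕ) (hn : 2 ≤ n) (d : SpRoot n → ℝ) (hd : d ∈ Kcone n) :
    (∀ i j k : ℕ, 1 ≤ i → i ≤ j → j + 1 ≤ n → i ≤ k → k ≤ j + 1 →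
      dB d i k ≤ dA d i j + dB d k (j+1)) ∧
    (∀ i j k : ℕ, 1 ≤ i → i ≤ j → j < k → k ≤ n →
      dB d i k ≤ dA d i j + dB d (j+1) k) := by
  refine ⟨fun i j k hi hij hjn hik hkj ↦ ?_, fun i j k ↦ dB_le_dA_add_dB hd⟩
  have F : dB d i (j + 1) ≤ dA d i j + dB d (j + 1) (j + 1) :=
    dB_le_dA_add_dB hd hi hij j.lt_succ_self hjn
  have diag : dB d i k + dB d (j + 1) (j + 1) ≤ dB d i (j + 1) + dB d k (j + 1) :=
    dB_add_dB_diag_le hd hi hik hkj hjn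
  linarith
end

section
/- Every d ∈ K_{2n} satisfies the inequalities (G_{i,j,k,l}): d_{i,j̄} + d_{k,l̄} ≥ d_{i,k̄} + d_{j,l̄} for all 1 ≤ i < k ≤ j < l ≤ n, and (H_{i,j,k,l}): d_{i,l̄} + d_{k,j̄} ≥ d_{i,k̄} + d_{j,l̄} for all 1 ≤ i < k ≤ j < l ≤ n. -/
/-!
Reflect the part `i ≤ j` of the array `(i, j) ↦ d_{i,j̄}` in the diagonal to make it symmetric. On
`2 × 2` blocks of adjacent rows and columns, the Monge inequality of the symmetric array is (C) off
the diagonal and (D) on it. Summing over such blocks gives the Monge inequality for every pair of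
rows and every pair of columns: rows `k ≤ j` and columns `i ≤ l` give (G), while rows `i ≤ j` and
columns `k ≤ l` give (H).
-/

open Order

section Monge

variable {α β R : Type*}

/-- The Monge property of the array `f` on the rows in `s` and the columns in `t`. -/
def IsMongeOn [LE α] [LE β] [Add R] [LE R] (f : α → β → R) (s : Set α) (t : Set β) : Prop :=
  ∀ ⦃a⦄, a ∈ s → ∀ ⦃b⦄, b ∈ s → a ≤ b → ∀ ⦃c⦄, c ∈ t → ∀ ⦃e⦄, e ∈ t → c ≤ e →
    f a c + f b e ≤ f a e + f b c

theorem isMongeOn_of_succ [AddCommGroup R] [PartialOrder R] [IsOrderedAddMonoid R]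
    [PartialOrder α] [SuccOrder α] [IsSuccArchimedean α]
    [PartialOrder β] [SuccOrder β] [IsSuccArchimedean β]
    {f : α → β → R} {s : Set α} {t : Set β} (hs : s.OrdConnected) (ht : t.OrdConnected)
    (hf : ∀ a ∈ s, succ a ∈ s → ∀ c ∈ t, succ c ∈ t →
      f a c + f (succ a) (succ c) ≤ f a (succ c) + f (succ a) c) :
    IsMongeOn f s t := by
  have row_diff (a) (ha : a ∈ s) (ha' : succ a ∈ s) :
      MonotoneOn (fun c ↦ f a c - f (succ a) c) t :=
    monotoneOn_of_le_succ ht fun c _ hc hc' ↦ sub_le_sub_iff.2 (hf a ha ha' c hc hc')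
  intro a ha b hb hab c hc e he hce
  have col_diff : MonotoneOn (fun a ↦ f a c - f a e) s :=
    monotoneOn_of_le_succ hs fun a _ ha ha' ↦ sub_le_sub_iff.2 <|
      (sub_le_sub_iff.1 (row_diff a ha ha' hc he hce)).trans_eq (add_comm _ _)
  exact (sub_le_sub_iff.1 (col_diff ha hb hab)).trans_eq (add_comm _ _)

end Monge

section Symmetrization

variable {α R : Type*} [LinearOrder α]

/-- The symmetric array that agrees with `f` on and above the diagonal; the entries of `f` below
the diagonal are discarded. -/
def upperSymm (f : α → α → R) (a b : α) : R := f (min a b) (max a b)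

theorem upperSymm_of_le (f : α → α → R) {a b : α} (h : a ≤ b) : upperSymm f a b = f a b := by
  rw [upperSymm, min_eq_left h, max_eq_right h]

theorem upperSymm_comm (f : α → α → R) (a b : α) : upperSymm f a b = upperSymm f b a := by
  rw [upperSymm, upperSymm, min_comm, max_comm]

theorem upperSymm_of_ge (f : α → α → R) {a b : α} (h : b ≤ a) : upperSymm f a b = f b a := by
  rw [upperSymm_comm, upperSymm_of_le f h]

variable [SuccOrder α] [IsSuccArchimedean α] [AddCommGroup R] [PartialOrder R]
  [IsOrderedAddMonoid R] {f : α → α → R} {s : Set α}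

theorem isMongeOn_upperSymm (hs : s.OrdConnected)
    (above : ∀ i j, i ∈ s → succ j ∈ s → i < j →
      f i j + f (succ i) (succ j) ≤ f i (succ j) + f (succ i) j)
    (diag : ∀ i, i ∈ s → succ i ∈ s →
      f i i + f (succ i) (succ i) ≤ f i (succ i) + f i (succ i)) :
    IsMongeOn (upperSymm f) s s := by
  have cell_above (i j) (hi : i ∈ s) (hj : succ j ∈ s) (hij : i < j) :
      upperSymm f i j + upperSymm f (succ i) (succ j) ≤
        upperSymm f i (succ j) + upperSymm f (succ i) j := by
    rw [upperSymm_of_le f hij.le, upperSymm_of_le f (succ_le_succ hij.le),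
      upperSymm_of_le f (hij.le.trans (le_succ j)), upperSymm_of_le f (succ_le_of_lt hij)]
    exact above i j hi hj hij
  refine isMongeOn_of_succ hs hs fun i hi hi' j hj hj' ↦ ?_
  rcases lt_trichotomy i j with hij | rfl | hji
  · exact cell_above i j hi hj' hij
  · rw [upperSymm_of_le f le_rfl, upperSymm_of_le f le_rfl, upperSymm_of_le f (le_succ i),
      upperSymm_of_ge f (le_succ i)]
    exact diag i hi hi'
  · rw [upperSymm_comm f i j, upperSymm_comm f (succ i) (succ j), upperSymm_comm f i (succ j),
      upperSymm_comm f (succ i) j, add_comm (upperSymm f (succ j) i)]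
    exact cell_above j i hj hi' hji

theorem spFFLV_ineq_G_H_general (hs : s.OrdConnected)
    (above : ∀ i j, i ∈ s → succ j ∈ s → i < j →
      f i j + f (succ i) (succ j) ≤ f i (succ j) + f (succ i) j)
    (diag : ∀ i, i ∈ s → succ i ∈ s →
      f i i + f (succ i) (succ i) ≤ f i (succ i) + f i (succ i)) :
    (∀ i j k l, i ∈ s → i ≤ k → k ≤ j → j ≤ l → l ∈ s → f i k + f j l ≤ f i j + f k l) ∧
    (∀ i j k l, i ∈ s → i ≤ k → k ≤ j → j ≤ l → l ∈ s → f i k + f j l ≤ f i l + f k j) := by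
  have monge := isMongeOn_upperSymm hs above diag
  constructor <;> intro i j k l hi hik hkj hjl hl
  all_goals
    have hk : k ∈ s := hs.out hi hl ⟨hik, hkj.trans hjl⟩
    have hj : j ∈ s := hs.out hi hl ⟨hik.trans hkj, hjl⟩
  · have rect := monge hk hj hkj hi hl (hik.trans (hkj.trans hjl))
    rwa [upperSymm_of_ge f hik, upperSymm_of_le f hjl, upperSymm_of_le f (hkj.trans hjl),
      upperSymm_of_ge f (hik.trans hkj), add_comm (f k l)] at rect
  · have rect := monge hi hj (hik.trans hkj) hk hl (hkj.trans hjl)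
    rwa [upperSymm_of_le f hik, upperSymm_of_le f hjl,
      upperSymm_of_le f (hik.trans (hkj.trans hjl)), upperSymm_of_ge f hkj] at rect

end Symmetrization

section Kcone

variable {n : ℕ} {d : SpRoot n → ℝ}

theorem dB_add_dB_succ_succ_le (hd : d ∈ Kcone n) {i j : ℕ} (hi : 1 ≤ i) (hij : i < j)
    (hj : j + 1 ≤ n) : dB d i j + dB d (i + 1) (j + 1) ≤ dB d i (j + 1) + dB d (i + 1) j :=
  hd (.C, i, j) (.inr (.inr (.inl ⟨rfl, hi, hij, hj⟩)))

theorem dB_self_add_dB_succ_self_le (hd : d ∈ Kcone n) {i : ℕ} (hi : 1 ≤ i) (hin : i + 1 ≤ n) :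
    dB d i i + dB d (i + 1) (i + 1) ≤ dB d i (i + 1) + dB d i (i + 1) :=
  (hd (.D, i, i + 1) (.inr (.inr (.inr ⟨rfl, hi, hin, rfl⟩)))).trans_eq (two_mul _)

end Kcone

/-- Every `d ∈ K_{2n}` satisfies
`(G_{i,j,k,l}) : d_{i,j̄} + d_{k,l̄} ≥ d_{i,k̄} + d_{j,l̄}` and
`(H_{i,j,k,l}) : d_{i,l̄} + d_{k,j̄} ≥ d_{i,k̄} + d_{j,l̄}` for `1 ≤ i < k ≤ j < l ≤ n`. -/
theorem spFFLV_ineq_G_H (n : ℕ) (hn : 2 ≤ n) (d : SpRoot n → ℝ) (hd : d ∈ Kcone n) :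
    (∀ i j k l : ℕ, 1 ≤ i → i < k → k ≤ j → j < l → l ≤ n →
      dB d i k + dB d j l ≤ dB d i j + dB d k l) ∧
    (∀ i j k l : ℕ, 1 ≤ i → i < k → k ≤ j → j < l → l ≤ n →
      dB d i k + dB d j l ≤ dB d i l + dB d k j) := by
  obtain ⟨hG, hH⟩ := spFFLV_ineq_G_H_general (f := dB d) (Set.ordConnected_Icc (a := 1) (b := n))
    (fun i j hi hj hij ↦ dB_add_dB_succ_succ_le hd hi.1 hij hj.2)
    (fun i hi hi' ↦ dB_self_add_dB_succ_self_le hd hi.1 hi'.2)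
  exact ⟨fun i j k l hi hik hkj hjl hl ↦ hG i j k l ⟨hi, by lia⟩ hik.le hkj hjl.le ⟨by lia, hl⟩,
    fun i j k l hi hik hkj hjl hl ↦ hH i j k l ⟨hi, by lia⟩ hik.le hkj hjl.le ⟨by lia, hl⟩⟩
end

section
/- Let d ∈ K_{2n} and let e_1,…,e_{2n} be the standard basis of ℂ^{2n}. Fix integers 1 ≤ x < y ≤ 2n. Then for every m ≥ 1 and every sequence of positive roots β_1,…,β_m ∈ Φ⁺ such that the matrix product f_{β_1}·f_{β_2}⋯f_{β_m} applied to e_x equals e_y or −e_y, one has d(β_1) + … + d(β_m) ≥ d(r(x,y)); moreover this bound is attained, since f_{r(x,y)}·e_x = ±e_y. -/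
/-- The elementary `2n × 2n` matrix with a `1` in row `p`, column `q` (rows and columns
numbered `1, …, 2n`) and `0` elsewhere. -/
noncomputable def Emat (n p q : ℕ) : Matrix (Fin (2*n)) (Fin (2*n)) ℂ :=
  Matrix.of fun a b => if a.val + 1 = p ∧ b.val + 1 = q then 1 else 0

/-- The root vectors `f_β` of `sp_{2n}` as `2n × 2n` matrices:
`f_{i,ī} = E_{ī,i}`, `f_{i,j} = E_{j+1,i} - E_{ī,(j+1)̄}` for `j < n`,
`f_{i,j̄} = E_{j̄,i} + E_{ī,j}` for `i < j`, with `ī := 2n+1-i`, and the root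
`α_{i,n} = α_{i,n̄}` (for `i < n`) carrying the vector `f_{i,n̄}`. -/
noncomputable def fvec (n : ℕ) : ℕ × ℕ × Bool → Matrix (Fin (2*n)) (Fin (2*n)) ℂ
  | (i, j, false) =>
      if j < n then Emat n (j+1) i - Emat n (2*n+1-i) (2*n+1-(j+1))
      else if i < n then Emat n (n+1) i + Emat n (2*n+1-i) n
      else Emat n (n+1) n
  | (i, j, true) =>
      if i = j then Emat n (2*n+1-i) i
      else Emat n (2*n+1-j) i + Emat n (2*n+1-i) j

/-- The standard basis vector `e_x` of `ℂ^{2n}` (coordinates numbered `1, …, 2n`). -/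
noncomputable def evec (n x : ℕ) : Fin (2*n) → ℂ :=
  fun a => if a.val + 1 = x then 1 else 0

/-- The positive root `r(x,y)` attached to `1 ≤ x < y ≤ 2n` (identifying
`1 < ⋯ < n < n̄ < ⋯ < 1̄` with `{1, …, 2n}` via `ī = 2n+1-i`):
`r(x,y) = α_{x,y-1}` if `y ≤ n`; `r(x,y) = α_{x,(2n+1-y)̄}` if `x ≤ n < y ≤ 2n+1-x`;
`r(x,y) = α_{2n+1-y,x̄}` if `x ≤ n` and `y > 2n+1-x`; `r(x,y) = α_{2n+1-y,2n-x}` if `n < x`. -/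
def rIdxXY (n x y : ℕ) : ℕ × ℕ × Bool :=
  if y ≤ n then (x, y - 1, false)
  else if x ≤ n then
    if y ≤ 2*n + 1 - x then rIdx n x (2*n + 1 - y) true
    else rIdx n (2*n + 1 - y) x true
  else (2*n + 1 - y, 2*n - x, false)

/-!
A nonzero entry of `f_{β₁}⋯f_{β_m}` in position `(y, x)` comes from a path `x = x₀ < ⋯ < x_m = y`
along nonzero entries of the factors. A nonzero entry `(y, x)` of `f_β` forces `β = r(x,y)`, so it
suffices that `w(x,y) = d(r(x,y))` satisfies the triangle inequality. Since `r(ȳ,x̄) = r(x,y)`, the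
inequalities defining `K_{2n}` say exactly that `w`, extended by `w(x,x) = 0`, is supermodular on
unit squares above the diagonal: `A` is the case of a square touching the diagonal, `D` that of a
square symmetric under `(x,y) ↦ (ȳ,x̄)`. Hence the increments `w(x,t+1) - w(x,t)` grow with `x ≤ t`.
For `x ≤ y ≤ z`, comparing those for `x` and `y` and summing over `y ≤ t < z` gives
`w(x,z) - w(x,y) ≤ w(y,z)`.
-/

section Supermodular

variable {G : Type*} [AddCommGroup G] [PartialOrder G] [IsOrderedAddMonoid G]

/-- Supermodularity of the array `D` above the diagonal of `[a, b]²`, required on unit squares only;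
it implies the triangle inequality if `D` vanishes on the diagonal. The corner `(x + 1, y)` may lie
on the diagonal, so the condition involves diagonal values of `D`. -/
def IsSupermodularAboveDiag (D : ℕ → ℕ → G) (a b : ℕ) : Prop :=
  ∀ x y, a ≤ x → x < y → y < b → D x (y + 1) + D (x + 1) y ≤ D x y + D (x + 1) (y + 1)

namespace IsSupermodularAboveDiag

variable {D : ℕ → ℕ → G} {a b : ℕ}

lemma increment_mono (hD : IsSupermodularAboveDiag D a b) {x y z : ℕ} (hx : a ≤ x) (hxy : x ≤ y)
    (hyz : y ≤ z) (hz : z < b) : D x (z + 1) - D x z ≤ D y (z + 1) - D y z := by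
  induction y, hxy using Nat.le_induction with
  | base => exact le_rfl
  | succ y hxy ih =>
    have hsquare := hD y z (by omega) (by omega) hz
    calc D x (z + 1) - D x z ≤ D y (z + 1) - D y z := ih (by omega)
      _ ≤ D (y + 1) (z + 1) - D (y + 1) z := by
        rwa [sub_le_sub_iff, add_comm (D (y + 1) _)]

theorem le_add_of_diag_eq_zero (hD : IsSupermodularAboveDiag D a b) {x y z : ℕ}
    (hdiag : D y y = 0) (hx : a ≤ x) (hxy : x ≤ y) (hyz : y ≤ z) (hz : z ≤ b) :
    D x z ≤ D x y + D y z := by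
  induction z, hyz using Nat.le_induction with
  | base => rw [hdiag, add_zero]
  | succ z hyz ih =>
    calc D x (z + 1) = D x z + (D x (z + 1) - D x z) := by abel
      _ ≤ (D x y + D y z) + (D y (z + 1) - D y z) :=
        add_le_add (ih (by omega)) (hD.increment_mono hx hxy hyz (by omega))
      _ = D x y + D y (z + 1) := by abel

end IsSupermodularAboveDiag

end Supermodular

theorem le_sum_of_list_prod_apply_ne_zero {ι κ R G : Type*} [Fintype ι] [DecidableEq ι]
    [Preorder ι] [Semiring R] [AddCommMonoid G] [PartialOrder G] [IsOrderedAddMonoid G]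
    {δ : ι → ι → G} {A : κ → Matrix ι ι R} {w : κ → G} (hself : ∀ a, δ a a ≤ 0)
    (htri : ∀ a b c, a ≤ b → b ≤ c → δ a c ≤ δ a b + δ b c)
    (hA : ∀ k a b, A k b a ≠ 0 → a ≤ b ∧ δ a b ≤ w k) (l : List κ) {a b : ι}
    (h : (l.map A).prod b a ≠ 0) : a ≤ b ∧ δ a b ≤ (l.map w).sum := by
  induction l generalizing b with
  | nil =>
    obtain rfl : b = a := by
      by_contra hba
      exact h (Matrix.one_apply_ne hba)
    exact ⟨le_rfl, hself b⟩
  | cons k l ih =>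
    rw [List.map_cons, List.prod_cons, Matrix.mul_apply] at h
    obtain ⟨c, -, hc⟩ := Finset.exists_ne_zero_of_sum_ne_zero h
    obtain ⟨hcb, hk⟩ := hA k c b (left_ne_zero_of_mul hc)
    obtain ⟨hac, hl⟩ := ih (right_ne_zero_of_mul hc)
    refine ⟨hac.trans hcb, ?_⟩
    calc δ a b ≤ δ a c + δ c b := htri a c b hac hcb
      _ ≤ (l.map w).sum + w k := add_le_add hl hk
      _ = ((k :: l).map w).sum := by rw [List.map_cons, List.sum_cons, add_comm]

section RootIndex

variable {n x y : ℕ}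

lemma rIdxXY_conj (hxy : x < y) :
    rIdxXY n (2 * n + 1 - y) (2 * n + 1 - x) = rIdxXY n x y := by
  grind [rIdxXY, rIdx]

lemma rIdxXY_of_le (hy : y ≤ n) : rIdxXY n x y = (x, y - 1, false) := if_pos hy

lemma rIdxXY_of_lt_of_add_le (hy : n < y) (h : x + y ≤ 2 * n + 1) :
    rIdxXY n x y = rIdx n x (2 * n + 1 - y) true := by
  rw [rIdxXY, if_neg (by omega), if_pos (by omega), if_pos (by omega)]

lemma IsSpRootIdx.exists_rIdxXY_eq {t : ℕ × ℕ × Bool} (ht : IsSpRootIdx n t) :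
    ∃ x y, x < y ∧ x + y ≤ 2 * n + 1 ∧ rIdxXY n x y = t := by
  obtain ⟨i, j, b⟩ := t
  obtain ⟨-, hij, hj, hb⟩ := ht
  dsimp only at hij hj hb
  cases b with
  | false => exact ⟨i, j + 1, by omega, by omega, by grind [rIdxXY, rIdx]⟩
  | true => exact ⟨i, 2 * n + 1 - j, by omega, by omega, by grind [rIdxXY, rIdx]⟩

end RootIndex

section RootVector

variable {n x y : ℕ}

lemma evec_val_add_one (b : Fin (2 * n)) : evec n (b + 1) = Pi.single b 1 := by
  ext a
  simp [evec, Pi.single_apply, Fin.ext_iff]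

lemma exists_fin_val_add_one_eq (hx : 1 ≤ x) (hx' : x ≤ 2 * n) : ∃ b : Fin (2 * n), b + 1 = x :=
  ⟨⟨x - 1, by omega⟩, Nat.sub_add_cancel hx⟩

lemma Emat_apply (p q : ℕ) (b a : Fin (2 * n)) :
    Emat n p q b a = if b + 1 = p ∧ a + 1 = q then 1 else 0 := rfl

lemma Emat_mulVec_evec (hx : 1 ≤ x) (hx' : x ≤ 2 * n) (p q : ℕ) :
    (Emat n p q).mulVec (evec n x) = if q = x then evec n p else 0 := by
  obtain ⟨b, rfl⟩ := exists_fin_val_add_one_eq hx hx'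
  rw [evec_val_add_one, Matrix.mulVec_single_one]
  ext a
  split_ifs with hq <;> simp [Emat, evec, eq_comm, hq]

lemma fvec_rIdxXY_of_add_le (hxy : x < y) (h : x + y ≤ 2 * n) :
    fvec n (rIdxXY n x y) =
      Emat n y x + (if y ≤ n then -1 else 1 : ℂ) • Emat n (2 * n + 1 - x) (2 * n + 1 - y) := by
  by_cases hy : y ≤ n
  · have hy' : y - 1 + 1 = y := by omega
    simp [rIdxXY_of_le hy, fvec, hy, hy', show y - 1 < n by omega, sub_eq_add_neg]
  · rw [rIdxXY_of_lt_of_add_le (by omega) (by omega), if_neg hy, one_smul]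
    by_cases hyn : 2 * n + 1 - y = n
    · obtain rfl : y = n + 1 := by omega
      simp [rIdx, fvec, hyn, show x < n by omega]
    · have hy' : 2 * n + 1 - (2 * n + 1 - y) = y := by omega
      simp [rIdx, fvec, hyn, hy', show x ≠ 2 * n + 1 - y by omega]

lemma fvec_rIdxXY_of_add_eq (hxy : x < y) (h : x + y = 2 * n + 1) :
    fvec n (rIdxXY n x y) = Emat n y x := by
  rw [rIdxXY_of_lt_of_add_le (by omega) h.le, show 2 * n + 1 - y = x by omega]
  by_cases hxn : x = n
  · obtain rfl : y = n + 1 := by omega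
    simp [rIdx, fvec, hxn]
  · simp [rIdx, fvec, hxn, show 2 * n + 1 - x = y by omega]

theorem fvec_rIdxXY_mulVec_evec (hx : 1 ≤ x) (hxy : x < y) (hy : y ≤ 2 * n) :
    (fvec n (rIdxXY n x y)).mulVec (evec n x) = evec n y ∨
      (fvec n (rIdxXY n x y)).mulVec (evec n x) = -evec n y := by
  have hE := Emat_mulVec_evec (n := n) hx (by omega)
  obtain h | h | h : x + y ≤ 2 * n ∨ x + y = 2 * n + 1 ∨ 2 * n + 2 ≤ x + y := by omega
  · have hyx : 2 * n + 1 - y ≠ x := by omega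
    left
    rw [fvec_rIdxXY_of_add_le hxy h, Matrix.add_mulVec, Matrix.smul_mulVec, hE, hE,
      if_pos rfl, if_neg hyx, smul_zero, add_zero]
  · left
    rw [fvec_rIdxXY_of_add_eq hxy h, hE, if_pos rfl]
  · have hyx : 2 * n + 1 - y ≠ x := by omega
    rw [← rIdxXY_conj hxy, fvec_rIdxXY_of_add_le (by omega) (by omega),
      Matrix.add_mulVec, Matrix.smul_mulVec, hE, hE, if_neg hyx,
      if_pos (Nat.sub_sub_self (by omega)), zero_add, Nat.sub_sub_self (by omega)]
    split_ifs <;> simp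

theorem rIdxXY_eq_of_fvec_apply_ne_zero {t : ℕ × ℕ × Bool} (ht : IsSpRootIdx n t)
    {a b : Fin (2 * n)} (hba : fvec n t b a ≠ 0) : a < b ∧ rIdxXY n (a + 1) (b + 1) = t := by
  obtain ⟨x, y, hxy, h, rfl⟩ := ht.exists_rIdxXY_eq
  have hsupport : (b + 1 = y ∧ a + 1 = x) ∨ (b + 1 = 2 * n + 1 - x ∧ a + 1 = 2 * n + 1 - y) := by
    contrapose! hba
    obtain h | h := h.lt_or_eq
    · rw [fvec_rIdxXY_of_add_le hxy (by omega), Matrix.add_apply, Matrix.smul_apply,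
        Emat_apply, Emat_apply, if_neg (not_and.mpr hba.1), if_neg (not_and.mpr hba.2),
        smul_zero, add_zero]
    · rw [fvec_rIdxXY_of_add_eq hxy h, Emat_apply, if_neg (not_and.mpr hba.1)]
  obtain ⟨hb, ha⟩ | ⟨hb, ha⟩ := hsupport
  · exact ⟨by omega, by rw [ha, hb]⟩
  · exact ⟨by omega, by rw [ha, hb, rIdxXY_conj hxy]⟩

end RootVector

section RootWeight

variable {n : ℕ}

/-- The weight `d(r(x,y))` of the root taking `e_x` to `±e_y`, whose triangle inequality bounds the
weight of a product of root vectors. It is set to `0` for `y ≤ x`; only the diagonal value matters.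
-/
noncomputable def rootWeight (d : SpRoot n → ℝ) (x y : ℕ) : ℝ :=
  if x < y then dval d (rIdxXY n x y) else 0

variable {d : SpRoot n → ℝ} {x y i j : ℕ}

lemma rootWeight_self : rootWeight d x x = 0 := if_neg (lt_irrefl x)

lemma rootWeight_of_lt (hxy : x < y) : rootWeight d x y = dval d (rIdxXY n x y) := if_pos hxy

lemma rootWeight_conj (hxy : x ≤ y) (hy : y ≤ 2 * n + 1) :
    rootWeight d (2 * n + 1 - y) (2 * n + 1 - x) = rootWeight d x y := by
  obtain rfl | hxy := hxy.eq_or_lt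
  · rw [rootWeight_self, rootWeight_self]
  · rw [rootWeight_of_lt hxy, rootWeight_of_lt (by omega), rIdxXY_conj hxy]

lemma dA_eq_rootWeight (hij : i ≤ j) (hj : j ≤ n) : dA d i j = rootWeight d i (j + 1) := by
  rw [dA, rootWeight_of_lt (by omega)]
  grind [rIdxXY, rIdx]

lemma dB_eq_rootWeight (hij : i ≤ j) (hj : j ≤ n) :
    dB d i j = rootWeight d i (2 * n + 1 - j) := by
  rw [dB, rootWeight_of_lt (by omega), rIdxXY_of_lt_of_add_le (by omega) (by omega),
    show 2 * n + 1 - (2 * n + 1 - j) = j by omega]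

lemma rootWeight_square_of_le (hd : d ∈ Kcone n) (hx : 1 ≤ x) (hxy : x < y) (hy : y ≤ n) :
    rootWeight d x (y + 1) + rootWeight d (x + 1) y ≤
      rootWeight d x y + rootWeight d (x + 1) (y + 1) := by
  obtain ⟨j, rfl⟩ : ∃ j, y = j + 1 := ⟨y - 1, by omega⟩
  obtain rfl | hxj : x = j ∨ x < j := by omega
  · have hA : dA d x (x + 1) ≤ dA d x x + dA d (x + 1) (x + 1) :=
      hd (.A, x, x + 1) (by grind [Facets])
    rwa [dA_eq_rootWeight (by omega) hy, dA_eq_rootWeight le_rfl (by omega),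
      dA_eq_rootWeight le_rfl hy, ← add_zero (rootWeight d x _),
      ← rootWeight_self (d := d) (x := x + 1)] at hA
  · have hB : dA d x (j + 1) + dA d (x + 1) j ≤ dA d x j + dA d (x + 1) (j + 1) :=
      hd (.B, x, j) (by grind [Facets])
    rwa [dA_eq_rootWeight (by omega) hy, dA_eq_rootWeight hxj (by omega),
      dA_eq_rootWeight hxj.le (by omega), dA_eq_rootWeight (by omega) hy] at hB

lemma rootWeight_square_of_gt (hd : d ∈ Kcone n) (hx : 1 ≤ x) (hy : n < y) (h : x + y ≤ 2 * n) :
    rootWeight d x (y + 1) + rootWeight d (x + 1) y ≤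
      rootWeight d x y + rootWeight d (x + 1) (y + 1) := by
  obtain ⟨j, hj⟩ : ∃ j, y + j = 2 * n := ⟨2 * n - y, by omega⟩
  have hjy : 2 * n + 1 - j = y + 1 := by omega
  have hjy' : 2 * n + 1 - (j + 1) = y := by omega
  obtain rfl | hxj : x = j ∨ x < j := by omega
  · have hD : dB d x x + dB d (x + 1) (x + 1) ≤ 2 * dB d x (x + 1) :=
      hd (.D, x, x + 1) (by grind [Facets])
    have hconj := rootWeight_conj (d := d) (show x ≤ y by omega) (by omega)
    rw [show 2 * n + 1 - y = x + 1 by omega, hjy] at hconj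
    rw [dB_eq_rootWeight le_rfl (by omega), dB_eq_rootWeight le_rfl (by omega),
      dB_eq_rootWeight (Nat.le_succ x) (by omega), hjy, hjy', two_mul] at hD
    rwa [hconj]
  · have hC : dB d x j + dB d (x + 1) (j + 1) ≤ dB d x (j + 1) + dB d (x + 1) j :=
      hd (.C, x, j) (by grind [Facets])
    rwa [dB_eq_rootWeight hxj.le (by omega), dB_eq_rootWeight (by omega) (by omega),
      dB_eq_rootWeight (by omega) (by omega), dB_eq_rootWeight hxj (by omega), hjy, hjy'] at hC

theorem isSupermodularAboveDiag_rootWeight (hd : d ∈ Kcone n) :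
    IsSupermodularAboveDiag (rootWeight d) 1 (2 * n) := by
  have hhalf {x y : ℕ} (hx : 1 ≤ x) (hxy : x < y) (h : x + y ≤ 2 * n) :
      rootWeight d x (y + 1) + rootWeight d (x + 1) y ≤
        rootWeight d x y + rootWeight d (x + 1) (y + 1) := by
    obtain hy | hy := le_or_gt y n
    · exact rootWeight_square_of_le hd hx hxy hy
    · exact rootWeight_square_of_gt hd hx hy h
  intro x y hx hxy hy
  obtain h | h := le_or_gt (x + y) (2 * n)
  · exact hhalf hx hxy h
  · have hreflected := hhalf (x := 2 * n - y) (y := 2 * n - x) (by omega) (by omega) (by omega)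
    rw [show 2 * n - x + 1 = 2 * n + 1 - x by omega, show 2 * n - y + 1 = 2 * n + 1 - y by omega,
      show 2 * n - x = 2 * n + 1 - (x + 1) by omega, show 2 * n - y = 2 * n + 1 - (y + 1) by omega]
      at hreflected
    rwa [rootWeight_conj (by omega) (by omega), rootWeight_conj (by omega) (by omega),
      rootWeight_conj (by omega) (by omega), rootWeight_conj hxy.le (by omega),
      add_comm (rootWeight d (x + 1) (y + 1))] at hreflected

theorem rootWeight_le_sum_of_list_prod_apply_ne_zero (hd : d ∈ Kcone n) (l : List (SpRoot n))
    {a b : Fin (2 * n)} (h : (l.map fun β => fvec n β.val).prod b a ≠ 0) :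
    rootWeight d (a + 1) (b + 1) ≤ (l.map d).sum := by
  refine (le_sum_of_list_prod_apply_ne_zero (δ := fun a b : Fin (2 * n) =>
    rootWeight d (a + 1) (b + 1)) (fun _ => rootWeight_self.le) ?_ ?_ l h).2
  · intro a b c hab hbc
    exact (isSupermodularAboveDiag_rootWeight hd).le_add_of_diag_eq_zero rootWeight_self
      (by omega) (by omega) (by omega) (by omega)
  · intro β a b hβ
    obtain ⟨hab, hr⟩ := rIdxXY_eq_of_fvec_apply_ne_zero β.property hβ
    refine ⟨hab.le, le_of_eq ?_⟩
    rw [rootWeight_of_lt (by simpa using hab), hr]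
    exact dif_pos β.property

end RootWeight

/-- Let `d ∈ K_{2n}` and `1 ≤ x < y ≤ 2n`. For every `m ≥ 1` and every
sequence `β₁, …, β_m` of positive roots such that `f_{β₁}⋯f_{β_m}·e_x = ±e_y` one has
`d(β₁) + ⋯ + d(β_m) ≥ d(r(x,y))`; moreover the bound is attained, since
`f_{r(x,y)}·e_x = ±e_y`. -/
theorem spFFLV_min_on_M (n : ℕ) (hn : 2 ≤ n)
    (d : SpRoot n → ℝ) (hd : d ∈ Kcone n)
    (x y : ℕ) (hx : 1 ≤ x) (hxy : x < y) (hy : y ≤ 2*n) :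
    (∀ m : ℕ, 1 ≤ m → ∀ β : Fin m → SpRoot n,
      ((List.ofFn fun r => fvec n (β r).val).prod.mulVec (evec n x) = evec n y ∨
       (List.ofFn fun r => fvec n (β r).val).prod.mulVec (evec n x) = -(evec n y)) →
      dval d (rIdxXY n x y) ≤ ∑ r, d (β r)) ∧
    ((fvec n (rIdxXY n x y)).mulVec (evec n x) = evec n y ∨
     (fvec n (rIdxXY n x y)).mulVec (evec n x) = -(evec n y)) := by
  refine ⟨fun m _ β hβ => ?_, fvec_rIdxXY_mulVec_evec hx hxy hy⟩
  obtain ⟨a, rfl⟩ := exists_fin_val_add_one_eq hx (hxy.le.trans hy)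
  obtain ⟨b, rfl⟩ := exists_fin_val_add_one_eq (hx.trans hxy.le) hy
  have hentry : ((List.ofFn β).map fun β => fvec n β.val).prod b a ≠ 0 := by
    rw [List.map_ofFn, Function.comp_def]
    rw [evec_val_add_one, evec_val_add_one, Matrix.mulVec_single_one] at hβ
    obtain h | h := hβ <;>
      exact fun h0 => by simpa [h0] using congrFun h b
  calc dval d (rIdxXY n (a + 1) (b + 1)) = rootWeight d (a + 1) (b + 1) :=
        (rootWeight_of_lt hxy).symm
    _ ≤ ((List.ofFn β).map d).sum := rootWeight_le_sum_of_list_prod_apply_ne_zero hd _ hentry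
    _ = ∑ r, d (β r) := by rw [List.map_ofFn, List.sum_ofFn]; rfl
end
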